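/- arXiv:1606.00555 — 2 statements merged into one kernel-verified Lean document; each statement's English description precedes it below -/
import Mathlib

section
/- Assume σ₂ : ℝ → ℝ is C¹ with σ₂(x + 1/2) = σ₂(x) for all x, and set M̃_E := max_{x ∈ [0,1/2]} |σ₂'(x)|. Let σ_{1,0}, σ_{3,0} : ℝ → ℝ be C¹, 1-periodic, with zero mean over [0,1), and set M_I := TV σ_{1,0} + TV σ_{3,0} (total variations over one period). Suppose M_I / M̃_E > (3 / ln(13/12)) · (β/α). Then for every T > 6/(α M_I) there is no classical solution (σ₁, σ₃) of the system of weakly nonlinear gas dynamics on ℝ × [0,T] with these initial data such that σ₁, σ₃ are C² and 1-periodic in x; that is, the classical solution blows up at some time T_b ≤ 6/(α M_I). -/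
open MeasureTheory Set

/-- Classical solution of the system of weakly nonlinear gas dynamics on
`ℝ × [0,T]`: 1-periodic in `x` and satisfying both equations pointwise
(time derivatives taken within `[0,T]`). -/
def IsClassicalSolution (α β : ℝ) (σ₂ : ℝ → ℝ) (T : ℝ)
    (σ₁ σ₃ : ℝ → ℝ → ℝ) : Prop :=
  (∀ x t, σ₁ (x + 1) t = σ₁ x t) ∧ (∀ x t, σ₃ (x + 1) t = σ₃ x t) ∧
  ∀ x : ℝ, ∀ t ∈ Set.Icc (0 : ℝ) T,
    (derivWithin (fun s => σ₁ x s) (Set.Icc 0 T) t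
        + (α / 2) * deriv (fun y => (σ₁ y t) ^ 2) x
        + (β / 2) * ∫ y in (-1 : ℝ)..1,
            (1 / 2) * deriv σ₂ ((x + y) / 2) * σ₃ y t = 0) ∧
    (derivWithin (fun s => σ₃ x s) (Set.Icc 0 T) t
        - (α / 2) * deriv (fun y => (σ₃ y t) ^ 2) x
        - (β / 2) * ∫ y in (-1 : ℝ)..1,
            (1 / 2) * deriv σ₂ ((x + y) / 2) * σ₁ y t = 0)

/-! The pair `(σ₁, -σ₃)` solves two Burgers equations coupled through their sources. The coupling
kernel depends on `x + y` only, so an `x`-derivative of a source can be integrated by parts onto the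
other wave: the slope of each source is at most `k = (β/2) M̃_E` times the variation of the other
wave. An `L¹` estimate on `∂ₓσ₁` and `∂ₓσ₃` and Grönwall's inequality then bound the total variation
at time `t` by `M_I exp(k t)`.

By periodicity one of the two waves has initial slope at most `-M_I/4` somewhere. Along the
characteristic through that point the slope `ω` satisfies `ω' ≤ -α ω² + k M_I exp(k t)`. For
`t ≤ 6/(α M_I)` the hypothesis gives `exp(k t) ≤ 13/12`, so the accumulated forcing is at most
`M_I/12`, and `ω` stays below the solution of `q' = -α q²` with `q(0) = -M_I/4 + M_I/12 = -M_I/6`,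
which reaches `-∞` at time `6/(α M_I)`. -/

open Function (uncurry Periodic)

section Calculus

lemma periodic_deriv {𝕜 F : Type*} [NontriviallyNormedField 𝕜] [NormedAddCommGroup F]
    [NormedSpace 𝕜 F] {f : 𝕜 → F} {c : 𝕜} (hf : Periodic f c) : Periodic (deriv f) c := fun x => by
  rw [← deriv_comp_add_const, funext hf]

lemma abs_deriv_le_of_periodic {f : ℝ → ℝ} {c M : ℝ} (hc : 0 < c) (hf : Periodic f c)
    (hM : M ∈ upperBounds ((fun x => |deriv f x|) '' Icc 0 c)) (x : ℝ) : |deriv f x| ≤ M := by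
  obtain ⟨y, hy, hxy⟩ := (periodic_deriv hf).exists_mem_Ico₀ hc x
  exact hxy ▸ hM (mem_image_of_mem _ (Ico_subset_Icc_self hy))

lemma exists_abs_le_of_periodic {f : ℝ → ℝ → ℝ} {c : ℝ} {K : Set ℝ} (hc : 0 < c)
    (hf : Continuous (uncurry f)) (hper : ∀ t, Periodic (f · t) c) (hK : IsCompact K) :
    ∃ C : NNReal, ∀ x, ∀ t ∈ K, |f x t| ≤ C := by
  obtain ⟨C, hC⟩ :=
    ((isCompact_Icc (a := (0 : ℝ)) (b := c)).prod hK).exists_bound_of_continuousOn hf.continuousOn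
  refine ⟨C.toNNReal, fun x t ht => ?_⟩
  obtain ⟨y, hy, hxy⟩ := (hper t).exists_mem_Ico₀ hc x
  calc |f x t| = |f y t| := congrArg abs hxy
    _ ≤ C := hC (y, t) ⟨Ico_subset_Icc_self hy, ht⟩
    _ ≤ C.toNNReal := C.le_coe_toNNReal

lemma integral_eq_zero_of_hasDerivAt {f f' : ℝ → ℝ} {a b : ℝ} (hf : ∀ x, HasDerivAt f (f' x) x)
    (hf' : Continuous f') (hab : f a = f b) : ∫ x in a..b, f' x = 0 := by
  rw [intervalIntegral.integral_eq_sub_of_hasDerivAt (fun x _ => hf x)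
    (hf'.intervalIntegrable a b), hab, sub_self]

lemma hasDerivAt_intervalIntegral_of_continuous {E : Type*} [NormedAddCommGroup E]
    [NormedSpace ℝ E] {F F' : ℝ → ℝ → E} (a b : ℝ) (hF : ∀ x, Continuous (F x))
    (hF' : Continuous (uncurry F')) (hd : ∀ x y, HasDerivAt (F · y) (F' x y) x) (x : ℝ) :
    HasDerivAt (fun z => ∫ y in a..b, F z y) (∫ y in a..b, F' x y) x := by
  obtain ⟨C, hC⟩ := ((isCompact_Icc (a := x - 1) (b := x + 1)).prod
    (isCompact_uIcc (a := a) (b := b))).exists_bound_of_continuousOn hF'.continuousOn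
  have hnhds : Icc (x - 1) (x + 1) ∈ nhds x := Icc_mem_nhds (by linarith) (by linarith)
  refine (intervalIntegral.hasDerivAt_integral_of_dominated_loc_of_deriv_le
    (bound := fun _ => C) hnhds (.of_forall fun z => (hF z).aestronglyMeasurable)
    ((hF x).intervalIntegrable a b) (hF'.uncurry_left x).aestronglyMeasurable
    (.of_forall fun y hy z hz => ?_) intervalIntegrable_const
    (.of_forall fun y _ z _ => hd z y)).2
  exact hC (z, y) ⟨hz, uIoc_subset_uIcc hy⟩

lemma exists_le_neg_half_of_integral_eq_zero {g : ℝ → ℝ} {a b M : ℝ} (hab : a < b)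
    (hg : ContinuousOn g (Icc a b)) (hmean : ∫ x in a..b, g x = 0) (hM : 0 < M)
    (hint : M * (b - a) ≤ ∫ x in a..b, |g x|) : ∃ x ∈ Icc a b, g x ≤ -(M / 2) := by
  by_contra! hlt
  have habs : ∀ x ∈ Icc a b, |g x| < g x + M := fun x hx =>
    abs_lt.2 ⟨by linarith [hlt x hx], by linarith⟩
  have hgi : IntervalIntegrable g volume a b := hg.intervalIntegrable_of_Icc hab.le
  have : ∫ x in a..b, |g x| < ∫ x in a..b, (g x + M) :=
    intervalIntegral.integral_lt_integral_of_continuousOn_of_le_of_exists_lt hab hg.abs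
      (hg.add continuousOn_const) (fun x hx => (habs x (Ioc_subset_Icc_self hx)).le)
      ⟨a, left_mem_Icc.2 hab.le, habs a (left_mem_Icc.2 hab.le)⟩
  rw [intervalIntegral.integral_add hgi intervalIntegrable_const, hmean,
    intervalIntegral.integral_const, smul_eq_mul] at this
  linarith

lemma antitoneOn_Icc_of_hasDerivWithinAt_nonpos {f f' : ℝ → ℝ} {a b : ℝ}
    (hf : ∀ t ∈ Icc a b, HasDerivWithinAt f (f' t) (Icc a b) t) (hf' : ∀ t ∈ Icc a b, f' t ≤ 0) :
    AntitoneOn f (Icc a b) :=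
  antitoneOn_of_hasDerivWithinAt_nonpos (convex_Icc a b)
    (fun t ht => (hf t ht).continuousWithinAt)
    (fun t ht => (hf t (interior_subset ht)).mono interior_subset)
    (fun t ht => hf' t (interior_subset ht))

end Calculus

section DifferentialInequalities

variable {α a b : ℝ}

lemma mul_sub_lt_inv_of_riccati {q q' : ℝ → ℝ} (hα : 0 ≤ α) (hab : a ≤ b)
    (hq : ∀ t ∈ Icc a b, HasDerivWithinAt q (q' t) (Icc a b) t)
    (hq' : ∀ t ∈ Icc a b, q' t ≤ -α * q t ^ 2) (ha : q a < 0) : α * (b - a) < (-q a)⁻¹ := by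
  have hmem : a ∈ Icc a b := left_mem_Icc.2 hab
  have hanti : AntitoneOn q (Icc a b) := antitoneOn_Icc_of_hasDerivWithinAt_nonpos hq fun t ht =>
    (hq' t ht).trans (mul_nonpos_of_nonpos_of_nonneg (neg_nonpos.2 hα) (sq_nonneg _))
  have hneg : ∀ t ∈ Icc a b, q t < 0 := fun t ht => (hanti hmem ht ht.1).trans_lt ha
  have hinv : AntitoneOn (fun t => α * t - (q t)⁻¹) (Icc a b) := by
    refine antitoneOn_Icc_of_hasDerivWithinAt_nonpos (fun t ht =>
      ((hasDerivAt_id t).const_mul α).hasDerivWithinAt.sub ((hq t ht).inv (hneg t ht).ne))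
      fun t ht => ?_
    have : α ≤ -q' t / q t ^ 2 := by
      rw [le_div_iff₀ (sq_pos_of_neg (hneg t ht))]
      linarith [hq' t ht]
    linarith
  have hle : α * b - (q b)⁻¹ ≤ α * a - (q a)⁻¹ := hinv hmem (right_mem_Icc.2 hab) hab
  have hb : (q b)⁻¹ < 0 := inv_lt_zero.2 (hneg b (right_mem_Icc.2 hab))
  rw [inv_neg]
  linarith

/-- Subtracting the accumulated forcing `G` and adding back its bound `δ` gives a function
`q = ω - G + δ ≥ ω` with `q' ≤ -α ω²`; as `q` stays negative, `ω² ≥ q²`. -/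
lemma mul_sub_lt_inv_of_forced_riccati {ω ω' G G' : ℝ → ℝ} {δ : ℝ} (hα : 0 ≤ α) (hab : a ≤ b)
    (hω : ∀ t ∈ Icc a b, HasDerivWithinAt ω (ω' t) (Icc a b) t)
    (hG : ∀ t ∈ Icc a b, HasDerivWithinAt G (G' t) (Icc a b) t)
    (hω' : ∀ t ∈ Icc a b, ω' t ≤ -α * ω t ^ 2 + G' t) (hGδ : ∀ t ∈ Icc a b, G t ≤ δ)
    (ha : ω a + δ < G a) : α * (b - a) < (G a - δ - ω a)⁻¹ := by
  set q : ℝ → ℝ := fun t => ω t - G t + δ with hq_def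
  have hq : ∀ t ∈ Icc a b, HasDerivWithinAt q (ω' t - G' t) (Icc a b) t := fun t ht =>
    ((hω t ht).sub (hG t ht)).add_const δ
  have hq' : ∀ t ∈ Icc a b, ω' t - G' t ≤ -α * ω t ^ 2 := fun t ht => by linarith [hω' t ht]
  have hωq : ∀ t ∈ Icc a b, ω t ≤ q t := fun t ht => by linarith [hGδ t ht]
  have hanti : AntitoneOn q (Icc a b) := antitoneOn_Icc_of_hasDerivWithinAt_nonpos hq fun t ht =>
    (hq' t ht).trans (mul_nonpos_of_nonpos_of_nonneg (neg_nonpos.2 hα) (sq_nonneg _))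
  have hqa : q a < 0 := by linarith
  have hneg : ∀ t ∈ Icc a b, q t < 0 := fun t ht =>
    (hanti (left_mem_Icc.2 hab) ht ht.1).trans_lt hqa
  have hsq : ∀ t ∈ Icc a b, q t ^ 2 ≤ ω t ^ 2 := fun t ht =>
    sq_le_sq.2 (abs_le_abs_of_nonpos (hneg t ht).le (hωq t ht))
  have hlt := mul_sub_lt_inv_of_riccati hα hab hq
    (fun t ht => (hq' t ht).trans (by nlinarith [hsq t ht])) hqa
  rwa [show -q a = G a - δ - ω a by simp only [hq_def]; ring] at hlt

end DifferentialInequalities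

section PartialDerivatives

variable {u : ℝ → ℝ → ℝ} {x t c : ℝ}

/-- The partial derivative `∂ₓu` of a function `u` of `(x, t)`. -/
noncomputable def spaceDeriv (u : ℝ → ℝ → ℝ) (x t : ℝ) : ℝ := deriv (fun y => u y t) x

/-- The partial derivative `∂ₜu` of a function `u` of `(x, t)`. -/
noncomputable def timeDeriv (u : ℝ → ℝ → ℝ) (x t : ℝ) : ℝ := deriv (fun s => u x s) t

lemma hasDerivAt_spaceDeriv (hu : DifferentiableAt ℝ (uncurry u) (x, t)) :
    HasDerivAt (fun y => u y t) (spaceDeriv u x t) x :=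
  (hu.comp x (f := fun y => (y, t)) (by fun_prop)).hasDerivAt

lemma hasDerivAt_timeDeriv (hu : DifferentiableAt ℝ (uncurry u) (x, t)) :
    HasDerivAt (fun s => u x s) (timeDeriv u x t) t :=
  (hu.comp t (f := fun s => (x, s)) (by fun_prop)).hasDerivAt

lemma spaceDeriv_eq_fderiv (hu : DifferentiableAt ℝ (uncurry u) (x, t)) :
    spaceDeriv u x t = fderiv ℝ (uncurry u) (x, t) (1, 0) :=
  (hu.hasFDerivAt.comp_hasDerivAt x (f := fun y => (y, t))
    ((hasDerivAt_id x).prodMk (hasDerivAt_const x t))).deriv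

lemma timeDeriv_eq_fderiv (hu : DifferentiableAt ℝ (uncurry u) (x, t)) :
    timeDeriv u x t = fderiv ℝ (uncurry u) (x, t) (0, 1) :=
  (hu.hasFDerivAt.comp_hasDerivAt t (f := fun s => (x, s))
    ((hasDerivAt_const t x).prodMk (hasDerivAt_id t))).deriv

lemma uncurry_spaceDeriv (hu : Differentiable ℝ (uncurry u)) :
    uncurry (spaceDeriv u) = fun p => fderiv ℝ (uncurry u) p (1, 0) :=
  funext fun p => spaceDeriv_eq_fderiv (hu p)

lemma uncurry_timeDeriv (hu : Differentiable ℝ (uncurry u)) :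
    uncurry (timeDeriv u) = fun p => fderiv ℝ (uncurry u) p (0, 1) :=
  funext fun p => timeDeriv_eq_fderiv (hu p)

lemma contDiff_spaceDeriv {n : WithTop ℕ∞} (hu : ContDiff ℝ (n + 1) (uncurry u)) :
    ContDiff ℝ n (uncurry (spaceDeriv u)) := by
  rw [uncurry_spaceDeriv (hu.differentiable (by simp))]
  exact (hu.fderiv_right le_rfl).clm_apply contDiff_const

lemma contDiff_timeDeriv {n : WithTop ℕ∞} (hu : ContDiff ℝ (n + 1) (uncurry u)) :
    ContDiff ℝ n (uncurry (timeDeriv u)) := by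
  rw [uncurry_timeDeriv (hu.differentiable (by simp))]
  exact (hu.fderiv_right le_rfl).clm_apply contDiff_const

lemma spaceDeriv_timeDeriv (hu : ContDiff ℝ 2 (uncurry u)) (x t : ℝ) :
    spaceDeriv (timeDeriv u) x t = timeDeriv (spaceDeriv u) x t := by
  have hu₁ : Differentiable ℝ (uncurry u) := hu.differentiable two_ne_zero
  have hfd : Differentiable ℝ (fderiv ℝ (uncurry u)) :=
    (hu.fderiv_right (m := 1) le_rfl).differentiable one_ne_zero
  rw [spaceDeriv_eq_fderiv ((contDiff_timeDeriv hu).differentiable one_ne_zero _),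
    timeDeriv_eq_fderiv ((contDiff_spaceDeriv hu).differentiable one_ne_zero _),
    uncurry_timeDeriv hu₁, uncurry_spaceDeriv hu₁,
    fderiv_clm_apply (hfd _) (by fun_prop), fderiv_clm_apply (hfd _) (by fun_prop)]
  simpa using second_derivative_symmetric (fun p => (hu₁ p).hasFDerivAt)
    (hfd (x, t)).hasFDerivAt (1, 0) (0, 1)

lemma hasDerivWithinAt_along_curve {X : ℝ → ℝ} {X' : ℝ} {s : Set ℝ}
    (hu : DifferentiableAt ℝ (uncurry u) (X t, t)) (hX : HasDerivWithinAt X X' s t) :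
    HasDerivWithinAt (fun r => u (X r) r)
      (X' * spaceDeriv u (X t) t + timeDeriv u (X t) t) s t := by
  have hdir : ((X', 1) : ℝ × ℝ) = X' • (1, 0) + (0, 1) := by simp
  have h := hu.hasFDerivAt.comp_hasDerivWithinAt t (f := fun r => (X r, r))
    (hX.prodMk (hasDerivWithinAt_id t s))
  rwa [hdir, map_add, map_smul, smul_eq_mul, ← spaceDeriv_eq_fderiv hu,
    ← timeDeriv_eq_fderiv hu] at h

lemma periodic_spaceDeriv (hu : Periodic (u · t) c) : Periodic (spaceDeriv u · t) c :=
  periodic_deriv hu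

lemma spaceDeriv_neg (u : ℝ → ℝ → ℝ) : spaceDeriv (-u) = -spaceDeriv u := by
  ext x t
  exact deriv.fun_neg

lemma timeDeriv_neg (u : ℝ → ℝ → ℝ) : timeDeriv (-u) = -timeDeriv u := by
  ext x t
  exact deriv.fun_neg

lemma integral_spaceDeriv_eq_zero (hu : ContDiff ℝ 1 (uncurry u)) (hper : Periodic (u · t) c)
    (a : ℝ) : ∫ x in a..a + c, spaceDeriv u x t = 0 :=
  integral_eq_zero_of_hasDerivAt
    (fun x => hasDerivAt_spaceDeriv (hu.differentiable one_ne_zero (x, t)))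
    ((contDiff_spaceDeriv (n := 0) hu).continuous.uncurry_right t) (hper a).symm

lemma exists_integralCurve_of_periodic {F : ℝ → ℝ → ℝ} {T : ℝ} (hc : 0 < c)
    (hF : ContDiff ℝ 1 (uncurry F)) (hper : ∀ t, Periodic (F · t) c) (hT : 0 ≤ T) (x₀ : ℝ) :
    ∃ X : ℝ → ℝ, X 0 = x₀ ∧ ∀ t ∈ Icc 0 T, HasDerivWithinAt X (F (X t) t) (Icc 0 T) t := by
  have hdiff : Differentiable ℝ (uncurry F) := hF.differentiable one_ne_zero
  have hcpt : IsCompact (Icc 0 T) := isCompact_Icc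
  obtain ⟨L, hL⟩ := exists_abs_le_of_periodic hc hF.continuous hper hcpt
  obtain ⟨K, hK⟩ := exists_abs_le_of_periodic hc (contDiff_spaceDeriv (n := 0) hF).continuous
    (fun t => periodic_spaceDeriv (hper t)) hcpt
  have hPL : IsPicardLindelof (fun t x => F x t) (tmin := 0) (tmax := T) ⟨0, le_rfl, hT⟩ x₀
      (L * T.toNNReal) 0 L K :=
    { lipschitzOnWith := fun t ht => (lipschitzWith_of_nnnorm_deriv_le
        (fun x => (hasDerivAt_spaceDeriv (hdiff (x, t))).differentiableAt)
        fun x => hK x t ht).lipschitzOnWith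
      continuousOn := fun x _ => (hF.continuous.uncurry_left x).continuousOn
      norm_le := fun t ht x _ => hL x t ht
      mul_max_le := by simp [hT] }
  exact hPL.exists_eq_forall_mem_Icc_hasDerivWithinAt₀

end PartialDerivatives

section SmoothAbs

variable {ε : ℝ}

/-- The smooth approximation `√(a² + ε²)` of `|a|`: it makes the total variation of a smooth
function differentiable in time. -/
noncomputable def smoothAbs (ε a : ℝ) : ℝ := √(a ^ 2 + ε ^ 2)

lemma smoothAbs_nonneg (ε a : ℝ) : 0 ≤ smoothAbs ε a := Real.sqrt_nonneg _

lemma smoothAbs_pos (hε : ε ≠ 0) (a : ℝ) : 0 < smoothAbs ε a := by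
  unfold smoothAbs
  positivity

lemma abs_le_smoothAbs (ε a : ℝ) : |a| ≤ smoothAbs ε a :=
  Real.abs_le_sqrt (le_add_of_nonneg_right (sq_nonneg ε))

lemma smoothAbs_le_abs_add_abs (ε a : ℝ) : smoothAbs ε a ≤ |a| + |ε| :=
  Real.sqrt_le_iff.2 ⟨by positivity, by
    nlinarith [sq_abs a, sq_abs ε, mul_nonneg (abs_nonneg a) (abs_nonneg ε)]⟩

@[fun_prop]
lemma continuous_smoothAbs (ε : ℝ) : Continuous (smoothAbs ε) := by
  unfold smoothAbs
  fun_prop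

lemma hasDerivAt_smoothAbs (hε : ε ≠ 0) (a : ℝ) :
    HasDerivAt (smoothAbs ε) (a / smoothAbs ε a) a := by
  have hpos : a ^ 2 + ε ^ 2 ≠ 0 := by positivity
  refine (((hasDerivAt_pow 2 a).add_const (ε ^ 2)).sqrt hpos).congr_deriv ?_
  simp only [smoothAbs, Nat.cast_ofNat, Nat.add_one_sub_one, pow_one]
  exact mul_div_mul_left _ _ two_ne_zero

lemma abs_div_smoothAbs_le_one (ε a : ℝ) : |a / smoothAbs ε a| ≤ 1 := by
  rw [abs_div, abs_of_nonneg (smoothAbs_nonneg ε a)]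
  exact div_le_one_of_le₀ (abs_le_smoothAbs ε a) (smoothAbs_nonneg ε a)

lemma mul_smoothAbs (hε : ε ≠ 0) (a : ℝ) :
    a * smoothAbs ε a = a / smoothAbs ε a * (a ^ 2 + ε ^ 2) := by
  have hsq : smoothAbs ε a ^ 2 = a ^ 2 + ε ^ 2 := Real.sq_sqrt (by positivity)
  have := (smoothAbs_pos hε a).ne'
  rw [← hsq]
  field_simp

lemma contDiff_smoothAbs {n : WithTop ℕ∞} (hε : ε ≠ 0) : ContDiff ℝ n (smoothAbs ε) :=
  ((contDiff_id.pow 2).add contDiff_const).sqrt fun a => by positivity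

end SmoothAbs

section BurgersSource

variable {u : ℝ → ℝ → ℝ} {α : ℝ}

/-- The source `∂ₜu + α u ∂ₓu` of the Burgers equation with nonlinearity `(α/2) u²` that `u`
solves. -/
noncomputable def burgersSource (α : ℝ) (u : ℝ → ℝ → ℝ) (x t : ℝ) : ℝ :=
  timeDeriv u x t + α * (u x t * spaceDeriv u x t)

lemma contDiff_burgersSource {n : WithTop ℕ∞} (hu : ContDiff ℝ (n + 1) (uncurry u)) :
    ContDiff ℝ n (uncurry (burgersSource α u)) :=
  (contDiff_timeDeriv hu).add <| contDiff_const.mul <|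
    (hu.of_le le_self_add).mul (contDiff_spaceDeriv hu)

lemma spaceDeriv_burgersSource (hu : ContDiff ℝ 2 (uncurry u)) (x t : ℝ) :
    spaceDeriv (burgersSource α u) x t = timeDeriv (spaceDeriv u) x t
      + α * (spaceDeriv u x t ^ 2 + u x t * spaceDeriv (spaceDeriv u) x t) := by
  have hut := hasDerivAt_spaceDeriv
    ((contDiff_timeDeriv (n := 1) hu).differentiable one_ne_zero (x, t))
  have hux := hasDerivAt_spaceDeriv (hu.differentiable two_ne_zero (x, t))
  have huxx := hasDerivAt_spaceDeriv
    ((contDiff_spaceDeriv (n := 1) hu).differentiable one_ne_zero (x, t))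
  rw [← spaceDeriv_timeDeriv hu, sq]
  exact (hut.add ((hux.mul huxx).const_mul α)).deriv

lemma hasDerivWithinAt_spaceDeriv_along_characteristic {X : ℝ → ℝ} {s : Set ℝ} {t : ℝ}
    (hu : ContDiff ℝ 2 (uncurry u)) (hX : HasDerivWithinAt X (α * u (X t) t) s t) :
    HasDerivWithinAt (fun r => spaceDeriv u (X r) r)
      (-α * spaceDeriv u (X t) t ^ 2 + spaceDeriv (burgersSource α u) (X t) t) s t := by
  have hux : ContDiff ℝ 1 (uncurry (spaceDeriv u)) := contDiff_spaceDeriv hu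
  refine (hasDerivWithinAt_along_curve (hux.differentiable one_ne_zero _) hX).congr_deriv ?_
  rw [spaceDeriv_burgersSource hu]
  ring

end BurgersSource

section Variation

variable {u : ℝ → ℝ → ℝ} {α ε C t : ℝ}

/-- The total variation of `u(·, t)` over one spatial period `[0, 1]`. -/
noncomputable def variation (u : ℝ → ℝ → ℝ) (t : ℝ) : ℝ := ∫ x in (0 : ℝ)..1, |spaceDeriv u x t|

/-- The total variation of `u(·, t)` over one period, with `|·|` replaced by `smoothAbs ε`. -/
noncomputable def smoothVariation (ε : ℝ) (u : ℝ → ℝ → ℝ) (t : ℝ) : ℝ :=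
  ∫ x in (0 : ℝ)..1, smoothAbs ε (spaceDeriv u x t)

lemma variation_nonneg (u : ℝ → ℝ → ℝ) (t : ℝ) : 0 ≤ variation u t :=
  intervalIntegral.integral_nonneg zero_le_one fun _ _ => abs_nonneg _

lemma variation_neg (u : ℝ → ℝ → ℝ) : variation (-u) = variation u := by
  ext t
  simp only [variation, spaceDeriv_neg, Pi.neg_apply, abs_neg]

lemma variation_le_smoothVariation (hu : Continuous (spaceDeriv u · t)) :
    variation u t ≤ smoothVariation ε u t :=
  intervalIntegral.integral_mono_on zero_le_one (hu.abs.intervalIntegrable _ _)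
    ((by fun_prop : Continuous fun x => smoothAbs ε (spaceDeriv u x t)).intervalIntegrable _ _)
    fun _ _ => abs_le_smoothAbs _ _

lemma smoothVariation_le_variation_add (hu : Continuous (spaceDeriv u · t)) :
    smoothVariation ε u t ≤ variation u t + |ε| := by
  calc smoothVariation ε u t ≤ ∫ x in (0 : ℝ)..1, (|spaceDeriv u x t| + |ε|) :=
        intervalIntegral.integral_mono_on zero_le_one
          (Continuous.intervalIntegrable (by fun_prop) _ _)
          (Continuous.intervalIntegrable (by fun_prop) _ _) fun _ _ => smoothAbs_le_abs_add_abs _ _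
    _ = variation u t + |ε| := by
        rw [intervalIntegral.integral_add (hu.abs.intervalIntegrable _ _) intervalIntegrable_const]
        simp [variation]

lemma hasDerivAt_smoothVariation (hu : ContDiff ℝ 2 (uncurry u)) (hε : ε ≠ 0) (t : ℝ) :
    HasDerivAt (smoothVariation ε u) (∫ x in (0 : ℝ)..1,
      spaceDeriv u x t / smoothAbs ε (spaceDeriv u x t) * timeDeriv (spaceDeriv u) x t) t := by
  have hux : ContDiff ℝ 1 (uncurry (spaceDeriv u)) := contDiff_spaceDeriv hu
  have hw : Continuous fun p : ℝ × ℝ => spaceDeriv u p.2 p.1 := hux.continuous.comp continuous_swap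
  have hwt : Continuous fun p : ℝ × ℝ => timeDeriv (spaceDeriv u) p.2 p.1 :=
    (contDiff_timeDeriv (n := 0) hux).continuous.comp continuous_swap
  refine hasDerivAt_intervalIntegral_of_continuous
    (F := fun s x => smoothAbs ε (spaceDeriv u x s))
    (F' := fun s x => spaceDeriv u x s / smoothAbs ε (spaceDeriv u x s)
      * timeDeriv (spaceDeriv u) x s) 0 1 (fun s => ?_) ?_ (fun s x => ?_) t
  · exact (continuous_smoothAbs ε).comp (hux.continuous.uncurry_right s)
  · exact (hw.div ((continuous_smoothAbs ε).comp hw) fun _ => (smoothAbs_pos hε _).ne').mul hwt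
  · exact (hasDerivAt_smoothAbs hε _).comp s
      (hasDerivAt_timeDeriv (hux.differentiable one_ne_zero (x, s)))

/-- In conservation form, `∂ₜ|∂ₓu| + α ∂ₓ(u |∂ₓu|) = sgn(∂ₓu) ∂ₓ(burgersSource α u)`; smoothing the
absolute value costs the term in `ε²`. -/
lemma div_smoothAbs_mul_timeDeriv_spaceDeriv (hu : ContDiff ℝ 2 (uncurry u)) (hε : ε ≠ 0)
    (x t : ℝ) :
    spaceDeriv u x t / smoothAbs ε (spaceDeriv u x t) * timeDeriv (spaceDeriv u) x t
      = spaceDeriv u x t / smoothAbs ε (spaceDeriv u x t)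
          * (spaceDeriv (burgersSource α u) x t + α * ε ^ 2)
        - α * spaceDeriv (fun y s => u y s * smoothAbs ε (spaceDeriv u y s)) x t := by
  have hux := hasDerivAt_spaceDeriv (hu.differentiable two_ne_zero (x, t))
  have huxx := hasDerivAt_spaceDeriv
    ((contDiff_spaceDeriv (n := 1) hu).differentiable one_ne_zero (x, t))
  have hflux : spaceDeriv (fun y s => u y s * smoothAbs ε (spaceDeriv u y s)) x t = _ :=
    (hux.mul ((hasDerivAt_smoothAbs hε _).comp x huxx)).deriv
  rw [hflux, Function.comp_apply, mul_smoothAbs hε, spaceDeriv_burgersSource hu]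
  ring

lemma integral_div_smoothAbs_mul_timeDeriv_spaceDeriv (hu : ContDiff ℝ 2 (uncurry u))
    (hper : Periodic (u · t) 1) (hε : ε ≠ 0) :
    ∫ x in (0 : ℝ)..1,
        spaceDeriv u x t / smoothAbs ε (spaceDeriv u x t) * timeDeriv (spaceDeriv u) x t
      = ∫ x in (0 : ℝ)..1, spaceDeriv u x t / smoothAbs ε (spaceDeriv u x t)
          * (spaceDeriv (burgersSource α u) x t + α * ε ^ 2) := by
  have hux : ContDiff ℝ 1 (uncurry (spaceDeriv u)) := contDiff_spaceDeriv hu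
  have hw : Continuous (spaceDeriv u · t) := hux.continuous.uncurry_right t
  have hS : Continuous (spaceDeriv (burgersSource α u) · t) :=
    (contDiff_spaceDeriv (n := 0) (contDiff_burgersSource hu)).continuous.uncurry_right t
  have hq : Continuous fun x => spaceDeriv u x t / smoothAbs ε (spaceDeriv u x t) :=
    hw.div ((continuous_smoothAbs ε).comp hw) fun _ => (smoothAbs_pos hε _).ne'
  have hflux : ContDiff ℝ 1 (uncurry fun x s => u x s * smoothAbs ε (spaceDeriv u x s)) :=
    (hu.of_le one_le_two).mul ((contDiff_smoothAbs hε).comp hux)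
  have hflux_per : Periodic (fun x => u x t * smoothAbs ε (spaceDeriv u x t)) 1 := fun x => by
    simp only [hper x, periodic_spaceDeriv hper x]
  have hflux_int := integral_spaceDeriv_eq_zero hflux hflux_per 0
  have hflux_cont := (contDiff_spaceDeriv (n := 0) hflux).continuous.uncurry_right t
  rw [zero_add] at hflux_int
  simp_rw [div_smoothAbs_mul_timeDeriv_spaceDeriv (α := α) hu hε]
  rw [intervalIntegral.integral_sub (Continuous.intervalIntegrable (by fun_prop) _ _)
    ((hflux_cont.const_mul α).intervalIntegrable _ _), intervalIntegral.integral_const_mul,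
    hflux_int, mul_zero, sub_zero]

lemma deriv_smoothVariation_le (hu : ContDiff ℝ 2 (uncurry u)) (hper : Periodic (u · t) 1)
    (hε : ε ≠ 0) (hC : ∀ x, |spaceDeriv (burgersSource α u) x t| ≤ C) :
    deriv (smoothVariation ε u) t ≤ C + |α| * ε ^ 2 := by
  have hbound : ∀ x, ‖spaceDeriv u x t / smoothAbs ε (spaceDeriv u x t)
      * (spaceDeriv (burgersSource α u) x t + α * ε ^ 2)‖ ≤ C + |α| * ε ^ 2 := fun x => by
    calc _ ≤ 1 * (|spaceDeriv (burgersSource α u) x t| + |α * ε ^ 2|) := by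
          rw [norm_mul]
          exact mul_le_mul (abs_div_smoothAbs_le_one _ _) (abs_add_le _ _) (abs_nonneg _)
            zero_le_one
      _ ≤ C + |α| * ε ^ 2 := by
          rw [one_mul, abs_mul, abs_sq]
          gcongr
          exact hC x
  rw [(hasDerivAt_smoothVariation hu hε t).deriv,
    integral_div_smoothAbs_mul_timeDeriv_spaceDeriv (α := α) hu hper hε]
  simpa using (le_abs_self _).trans (intervalIntegral.norm_integral_le_of_norm_le_const
    (a := 0) (b := 1) fun x _ => hbound x)

end Variation

section BurgersPair

variable {α k T : ℝ} {u v : ℝ → ℝ → ℝ}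

/-- A pair of 1-periodic `C²` functions, each solving on `[0, T]` a Burgers equation whose source
has slope at most `k` times the variation of the other function. For the gas dynamics system the
pair is `(σ₁, -σ₃)`: the sign makes both waves obey the same Burgers equation. -/
structure IsBurgersPair (α k T : ℝ) (u v : ℝ → ℝ → ℝ) : Prop where
  contDiff_left : ContDiff ℝ 2 (uncurry u)
  contDiff_right : ContDiff ℝ 2 (uncurry v)
  periodic_left : ∀ t, Periodic (u · t) 1
  periodic_right : ∀ t, Periodic (v · t) 1
  abs_source_left_le : ∀ x, ∀ t ∈ Icc 0 T,
    |spaceDeriv (burgersSource α u) x t| ≤ k * variation v t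
  abs_source_right_le : ∀ x, ∀ t ∈ Icc 0 T,
    |spaceDeriv (burgersSource α v) x t| ≤ k * variation u t

namespace IsBurgersPair

lemma symm (h : IsBurgersPair α k T u v) : IsBurgersPair α k T v u :=
  ⟨h.contDiff_right, h.contDiff_left, h.periodic_right, h.periodic_left,
    h.abs_source_right_le, h.abs_source_left_le⟩

lemma mono {S : ℝ} (h : IsBurgersPair α k T u v) (hST : S ≤ T) : IsBurgersPair α k S u v where
  __ := h
  abs_source_left_le x t ht := h.abs_source_left_le x t (Icc_subset_Icc_right hST ht)
  abs_source_right_le x t ht := h.abs_source_right_le x t (Icc_subset_Icc_right hST ht)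

lemma variation_add_le_gronwallBound (h : IsBurgersPair α k T u v) (hk : 0 ≤ k) {ε t : ℝ}
    (hε : ε ≠ 0) (ht : t ∈ Icc 0 T) :
    variation u t + variation v t
      ≤ gronwallBound (variation u 0 + variation v 0 + 2 * |ε|) k (2 * |α| * ε ^ 2) t := by
  have hux (s : ℝ) : Continuous (spaceDeriv u · s) :=
    (contDiff_spaceDeriv (n := 1) h.contDiff_left).continuous.uncurry_right s
  have hvx (s : ℝ) : Continuous (spaceDeriv v · s) :=
    (contDiff_spaceDeriv (n := 1) h.contDiff_right).continuous.uncurry_right s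
  have hE (s : ℝ) :=
    (hasDerivAt_smoothVariation h.contDiff_left hε s).differentiableAt.hasDerivAt.add
      (hasDerivAt_smoothVariation h.contDiff_right hε s).differentiableAt.hasDerivAt
  have hgronwall := le_gronwallBound_of_liminf_deriv_right_le (a := 0) (b := T) (K := k)
    (δ := variation u 0 + variation v 0 + 2 * |ε|) (ε := 2 * |α| * ε ^ 2)
    (fun s _ => (hE s).continuousAt.continuousWithinAt)
    (fun s _ _ hr => (hE s).hasDerivWithinAt.liminf_right_slope_le hr)
    (by
      simp only [Pi.add_apply]
      linarith [smoothVariation_le_variation_add (ε := ε) (hux 0),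
        smoothVariation_le_variation_add (ε := ε) (hvx 0)])
    (fun s hs => by
      have hs' := Ico_subset_Icc_self hs
      have hu := deriv_smoothVariation_le h.contDiff_left (h.periodic_left s) hε
        (h.abs_source_left_le · s hs')
      have hv := deriv_smoothVariation_le h.contDiff_right (h.periodic_right s) hε
        (h.abs_source_right_le · s hs')
      have hku := mul_le_mul_of_nonneg_left (variation_le_smoothVariation (ε := ε) (hux s)) hk
      have hkv := mul_le_mul_of_nonneg_left (variation_le_smoothVariation (ε := ε) (hvx s)) hk
      simp only [Pi.add_apply]
      linarith) t ht
  rw [sub_zero] at hgronwall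
  exact (add_le_add (variation_le_smoothVariation (hux t))
    (variation_le_smoothVariation (hvx t))).trans hgronwall

lemma variation_add_le (h : IsBurgersPair α k T u v) (hk : 0 ≤ k) {t : ℝ} (ht : t ∈ Icc 0 T) :
    variation u t + variation v t ≤ (variation u 0 + variation v 0) * Real.exp (k * t) := by
  have hcont : Continuous fun ε : ℝ =>
      gronwallBound (variation u 0 + variation v 0 + 2 * |ε|) k (2 * |α| * ε ^ 2) t := by
    unfold gronwallBound
    split_ifs <;> fun_prop
  have hlim := (hcont.tendsto 0).mono_left (nhdsWithin_le_nhds (s := {0}ᶜ))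
  refine (ge_of_tendsto hlim ?_).trans_eq (by simp [gronwallBound_ε0])
  filter_upwards [self_mem_nhdsWithin] with ε hε
  exact h.variation_add_le_gronwallBound hk hε ht

lemma spaceDeriv_burgersSource_left_le (h : IsBurgersPair α k T u v) (hk : 0 ≤ k) {x t : ℝ}
    (ht : t ∈ Icc 0 T) :
    spaceDeriv (burgersSource α u) x t
      ≤ (variation u 0 + variation v 0) * (Real.exp (k * t) * k) := by
  calc _ ≤ k * variation v t := (le_abs_self _).trans (h.abs_source_left_le x t ht)
    _ ≤ k * ((variation u 0 + variation v 0) * Real.exp (k * t)) := by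
        gcongr
        linarith [h.variation_add_le hk ht, variation_nonneg u t]
    _ = _ := by ring

lemma exists_spaceDeriv_le (h : IsBurgersPair α k T u v)
    (hpos : 0 < variation u 0 + variation v 0) (hle : variation v 0 ≤ variation u 0) :
    ∃ x, spaceDeriv u x 0 ≤ -((variation u 0 + variation v 0) / 4) := by
  have hcont : Continuous (spaceDeriv u · 0) :=
    (contDiff_spaceDeriv (n := 1) h.contDiff_left).continuous.uncurry_right 0
  have hmean : ∫ x in (0 : ℝ)..1, spaceDeriv u x 0 = 0 := by
    simpa using integral_spaceDeriv_eq_zero (h.contDiff_left.of_le one_le_two)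
      (h.periodic_left 0) 0
  obtain ⟨x, -, hx⟩ := exists_le_neg_half_of_integral_eq_zero
    (M := (variation u 0 + variation v 0) / 2) zero_lt_one hcont.continuousOn hmean (by linarith)
    (show _ ≤ variation u 0 by linarith)
  exact ⟨x, by linarith⟩

theorem mul_lifespan_lt (h : IsBurgersPair α k T u v) (hα : 0 ≤ α) (hk : 0 ≤ k) (hT : 0 ≤ T)
    (hpos : 0 < variation u 0 + variation v 0) (hkT : k * T ≤ Real.log (13 / 12)) :
    α * T < 6 / (variation u 0 + variation v 0) := by
  wlog hle : variation v 0 ≤ variation u 0 generalizing u v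
  · rw [add_comm (variation u 0)] at hpos ⊢
    exact this h.symm hpos (le_of_not_ge hle)
  set M := variation u 0 + variation v 0
  obtain ⟨x₀, hx₀⟩ := h.exists_spaceDeriv_le hpos hle
  obtain ⟨X, hX₀, hX⟩ := exists_integralCurve_of_periodic one_pos
    (F := fun x t => α * u x t) (contDiff_const.mul (h.contDiff_left.of_le one_le_two))
    (fun t x => congrArg (α * ·) (h.periodic_left t x)) hT x₀
  have hG : ∀ t ∈ Icc 0 T, HasDerivWithinAt (fun t => M * (Real.exp (k * t) - 1))
      (M * (Real.exp (k * t) * k)) (Icc 0 T) t := fun t _ => by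
    simpa using ((((hasDerivAt_id t).const_mul k).exp.sub_const 1).const_mul M).hasDerivWithinAt
  have hexp : ∀ t ∈ Icc 0 T, M * (Real.exp (k * t) - 1) ≤ M / 12 := fun t ht => by
    have : Real.exp (k * t) ≤ 13 / 12 := (Real.le_log_iff_exp_le (by norm_num)).1
      ((mul_le_mul_of_nonneg_left ht.2 hk).trans hkT)
    nlinarith
  have hlt := mul_sub_lt_inv_of_forced_riccati hα hT
    (fun t ht => hasDerivWithinAt_spaceDeriv_along_characteristic h.contDiff_left (hX t ht)) hG
    (fun t ht => by linarith [h.spaceDeriv_burgersSource_left_le hk (x := X t) ht]) hexp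
    (by simp [hX₀]; linarith)
  simp only [sub_zero, mul_zero, Real.exp_zero, sub_self, zero_sub, hX₀] at hlt
  calc α * T < (-(M / 12) - spaceDeriv u x₀ 0)⁻¹ := hlt
    _ ≤ (M / 6)⁻¹ := by gcongr; linarith
    _ = 6 / M := inv_div _ _

end IsBurgersPair

end BurgersPair

section EntropyCoupling

variable {σ f f' : ℝ → ℝ} {v F : ℝ → ℝ → ℝ} {c M t : ℝ}

/-- The integral `∫ ½ σ'((x + y)/2) f(y) dy` over `[-1, 1]` through which the entropy wave `σ`
couples the two sound waves. -/
noncomputable def entropyCoupling (σ f : ℝ → ℝ) (x : ℝ) : ℝ :=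
  ∫ y in (-1 : ℝ)..1, (1 / 2) * deriv σ ((x + y) / 2) * f y

lemma hasDerivAt_comp_add_div_two (hσ : Differentiable ℝ σ) (x y : ℝ) :
    HasDerivAt (fun z => σ ((z + y) / 2)) (1 / 2 * deriv σ ((x + y) / 2)) x := by
  rw [mul_comm]
  exact (hσ _).hasDerivAt.comp x (((hasDerivAt_id x).add_const y).div_const 2)

lemma entropyCoupling_eq_neg_integral (hσ : ContDiff ℝ 1 σ) (hσ_per : Periodic σ 1)
    (hf : ContDiff ℝ 1 f) (hf_per : Periodic f 1) (x : ℝ) :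
    entropyCoupling σ f x = -∫ y in (-1 : ℝ)..1, σ ((x + y) / 2) * deriv f y := by
  have := hσ.continuous_deriv_one
  have hf' : Continuous (deriv f) := hf.continuous_deriv_one
  have hbdry : σ ((x + 1) / 2) * f 1 = σ ((x + -1) / 2) * f (-1) := by
    rw [← hσ_per ((x + -1) / 2), ← hf_per (-1), ← hf_per (-1 + 1)]
    ring_nf
  have hparts := intervalIntegral.integral_deriv_mul_eq_sub (a := -1) (b := 1)
    (fun y _ => by simpa only [add_comm] using
      hasDerivAt_comp_add_div_two (hσ.differentiable one_ne_zero) y x)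
    (fun y _ => (hf.differentiable one_ne_zero y).hasDerivAt)
    (Continuous.intervalIntegrable (by fun_prop) _ _) (hf'.intervalIntegrable _ _)
  rw [hbdry, sub_self, intervalIntegral.integral_add
    (Continuous.intervalIntegrable (by fun_prop) _ _)
    (Continuous.intervalIntegrable (by fun_prop) _ _)] at hparts
  exact eq_neg_of_add_eq_zero_left hparts

/-- Integrating by parts in `y` puts the derivative on `f`; since the kernel depends on `x + y`
only, differentiating in `x` then recreates the coupling and needs no second derivative of `σ`. -/
lemma hasDerivAt_entropyCoupling (hσ : ContDiff ℝ 1 σ) (hσ_per : Periodic σ 1)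
    (hf : ContDiff ℝ 1 f) (hf_per : Periodic f 1) (x : ℝ) :
    HasDerivAt (entropyCoupling σ f) (-entropyCoupling σ (deriv f) x) x := by
  have := hσ.continuous_deriv_one
  have := hf.continuous_deriv_one
  rw [funext (entropyCoupling_eq_neg_integral hσ hσ_per hf hf_per)]
  exact (hasDerivAt_intervalIntegral_of_continuous
    (F := fun x y => σ ((x + y) / 2) * deriv f y)
    (F' := fun x y => (1 / 2) * deriv σ ((x + y) / 2) * deriv f y) (-1) 1
    (fun x => by fun_prop) (by fun_prop)
    (fun x y => (hasDerivAt_comp_add_div_two (hσ.differentiable one_ne_zero) x y).mul_const _)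
    x).fun_neg

lemma abs_entropyCoupling_le (hM : ∀ x, |deriv σ x| ≤ M) (hf : Continuous f)
    (hf_per : Periodic f 1) (x : ℝ) : |entropyCoupling σ f x| ≤ M * ∫ y in (0 : ℝ)..1, |f y| := by
  have habs_per : Periodic (fun y => |f y|) 1 := hf_per.comp abs
  have hhalves : ∫ y in (-1 : ℝ)..1, |f y| = 2 * ∫ y in (0 : ℝ)..1, |f y| := by
    rw [← intervalIntegral.integral_add_adjacent_intervals (b := 0)
      (hf.abs.intervalIntegrable _ _) (hf.abs.intervalIntegrable _ _), two_mul]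
    simpa using habs_per.intervalIntegral_add_eq (-1) 0
  calc |entropyCoupling σ f x| ≤ ∫ y in (-1 : ℝ)..1, M / 2 * |f y| := by
        rw [← Real.norm_eq_abs]
        refine intervalIntegral.norm_integral_le_of_norm_le (neg_le_self zero_le_one)
          (.of_forall fun y _ => ?_) ((hf.abs.const_mul _).intervalIntegrable _ _)
        rw [Real.norm_eq_abs, abs_mul, abs_mul, abs_of_pos one_half_pos]
        gcongr
        linarith [hM ((x + y) / 2)]
    _ = M * ∫ y in (0 : ℝ)..1, |f y| := by
        rw [intervalIntegral.integral_const_mul, hhalves]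
        ring

lemma abs_spaceDeriv_le_of_eq_entropyCoupling (hσ : ContDiff ℝ 1 σ) (hσ_per : Periodic σ 1)
    (hM : ∀ x, |deriv σ x| ≤ M) (hv : ContDiff ℝ 1 (uncurry v)) (hv_per : Periodic (v · t) 1)
    (hF : ∀ x, F x t = c * entropyCoupling σ (v · t) x) (x : ℝ) :
    |spaceDeriv F x t| ≤ |c| * M * variation v t := by
  have hvt : ContDiff ℝ 1 (v · t) := hv.comp (contDiff_prodMk_left t)
  have hderiv : spaceDeriv F x t = c * -entropyCoupling σ (spaceDeriv v · t) x := by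
    rw [spaceDeriv, funext hF]
    exact ((hasDerivAt_entropyCoupling hσ hσ_per hvt hv_per x).const_mul c).deriv
  rw [hderiv, abs_mul, abs_neg, mul_assoc]
  gcongr
  exact abs_entropyCoupling_le hM hvt.continuous_deriv_one (periodic_spaceDeriv hv_per) x

end EntropyCoupling

namespace IsClassicalSolution

variable {α β ME T x t : ℝ} {σ₂ : ℝ → ℝ} {σ₁ σ₃ : ℝ → ℝ → ℝ}

lemma burgersSource_left (h : IsClassicalSolution α β σ₂ T σ₁ σ₃) (hT : 0 < T)
    (h₁ : Differentiable ℝ (uncurry σ₁)) (ht : t ∈ Icc 0 T) :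
    burgersSource α σ₁ x t = -(β / 2) * entropyCoupling σ₂ (σ₃ · t) x := by
  have heq := (h.2.2 x t ht).1
  rw [(hasDerivAt_timeDeriv (h₁ (x, t))).hasDerivWithinAt.derivWithin
    (uniqueDiffOn_Icc hT t ht), ((hasDerivAt_spaceDeriv (h₁ (x, t))).fun_pow 2).deriv] at heq
  simp only [burgersSource, entropyCoupling]
  linear_combination heq

lemma burgersSource_right (h : IsClassicalSolution α β σ₂ T σ₁ σ₃) (hT : 0 < T)
    (h₃ : Differentiable ℝ (uncurry σ₃)) (ht : t ∈ Icc 0 T) :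
    burgersSource α (-σ₃) x t = -(β / 2) * entropyCoupling σ₂ (σ₁ · t) x := by
  have heq := (h.2.2 x t ht).2
  rw [(hasDerivAt_timeDeriv (h₃ (x, t))).hasDerivWithinAt.derivWithin
    (uniqueDiffOn_Icc hT t ht), ((hasDerivAt_spaceDeriv (h₃ (x, t))).fun_pow 2).deriv] at heq
  simp only [burgersSource, entropyCoupling, spaceDeriv_neg, timeDeriv_neg, Pi.neg_apply]
  linear_combination -heq

lemma isBurgersPair (h : IsClassicalSolution α β σ₂ T σ₁ σ₃) (hT : 0 < T)
    (h₁ : ContDiff ℝ 2 (uncurry σ₁)) (h₃ : ContDiff ℝ 2 (uncurry σ₃)) (hσ₂ : ContDiff ℝ 1 σ₂)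
    (hσ₂_per : Periodic σ₂ 1) (hME : ∀ x, |deriv σ₂ x| ≤ ME) :
    IsBurgersPair α (|-(β / 2)| * ME) T σ₁ (-σ₃) where
  contDiff_left := h₁
  contDiff_right := h₃.neg
  periodic_left t x := h.1 x t
  periodic_right t x := congrArg Neg.neg (h.2.1 x t)
  abs_source_left_le x t ht := by
    rw [variation_neg]
    exact abs_spaceDeriv_le_of_eq_entropyCoupling hσ₂ hσ₂_per hME
      (h₃.of_le one_le_two) (h.2.1 · t)
      (fun x => h.burgersSource_left hT (h₁.differentiable two_ne_zero) ht) x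
  abs_source_right_le x t ht :=
    abs_spaceDeriv_le_of_eq_entropyCoupling hσ₂ hσ₂_per hME
      (h₁.of_le one_le_two) (h.1 · t)
      (fun x => h.burgersSource_right hT (h₃.differentiable two_ne_zero) ht) x

end IsClassicalSolution

theorem classical_solution_blowup_general {α β ME T : ℝ} {σ₂ : ℝ → ℝ} {σ₁ σ₃ : ℝ → ℝ → ℝ}
    (hα : 0 < α) (hσ₂ : ContDiff ℝ 1 σ₂) (hσ₂_per : Periodic σ₂ 1) (hME : ∀ x, |deriv σ₂ x| ≤ ME)
    (h₁ : ContDiff ℝ 2 (uncurry σ₁)) (h₃ : ContDiff ℝ 2 (uncurry σ₃))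
    (hsol : IsClassicalSolution α β σ₂ T σ₁ σ₃)
    (hcond : 3 * |β| * ME < Real.log (13 / 12) * (α * (variation σ₁ 0 + variation σ₃ 0))) :
    T < 6 / (α * (variation σ₁ 0 + variation σ₃ 0)) := by
  set M := variation σ₁ 0 + variation σ₃ 0 with hM
  by_contra! hT
  have hlog : 0 < Real.log (13 / 12) := Real.log_pos (by norm_num)
  have hME₀ : 0 ≤ ME := (abs_nonneg _).trans (hME 0)
  have hαM : 0 < α * M := pos_of_mul_pos_right ((by positivity : 0 ≤ 3 * |β| * ME).trans_lt hcond)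
    hlog.le
  have hT' : 0 < 6 / (α * M) := by positivity
  have hpair := (hsol.isBurgersPair (hT'.trans_le hT) h₁ h₃ hσ₂ hσ₂_per hME).mono hT
  have hkT : |-(β / 2)| * ME * (6 / (α * M)) ≤ Real.log (13 / 12) := by
    rw [mul_div_assoc', div_le_iff₀ hαM, abs_neg, abs_div, abs_two]
    linarith
  have hMpos : 0 < M := pos_of_mul_pos_right hαM hα.le
  have hlt := hpair.mul_lifespan_lt hα.le (by positivity) hT'.le (by rwa [variation_neg]) hkT
  rw [variation_neg, ← hM, mul_div_assoc', mul_div_mul_left _ _ hα.ne'] at hlt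
  exact lt_irrefl _ hlt

lemma three_mul_mul_lt_of_div_lt {α β L MI ME : ℝ} (hα : 0 < α) (hβ : 0 < β) (hL : 0 < L)
    (hME : 0 ≤ ME) (h : 3 / L * (β / α) < MI / ME) : 3 * β * ME < L * (α * MI) := by
  have hratio : 0 < MI / ME := lt_trans (by positivity) h
  have hME' : 0 < ME := hME.lt_of_ne' fun h₀ => by simp [h₀] at hratio
  rw [div_mul_div_comm, div_lt_div_iff₀ (by positivity) hME'] at h
  linarith

/-- finite-time blow-up of classical solutions.  If the initial
sound waves are strong enough relative to the entropy wave,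
`M_I / M̃_E > (3/ln(13/12)) (β/α)`, then no `C²`, `x`-periodic classical
solution exists on `ℝ × [0,T]` for any `T > 6/(α M_I)`. -/
theorem classical_solution_blowup
    (α β : ℝ) (hα : 0 < α) (hβ : 0 < β)
    (σ₂ : ℝ → ℝ) (hσ₂C1 : ContDiff ℝ 1 σ₂)
    (hσ₂per : ∀ x, σ₂ (x + 1 / 2) = σ₂ x)
    (ME : ℝ) (hME : IsGreatest ((fun x => |deriv σ₂ x|) '' Set.Icc 0 (1 / 2)) ME)
    (σ₁₀ σ₃₀ : ℝ → ℝ)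
    (h₁₀C1 : ContDiff ℝ 1 σ₁₀) (h₃₀C1 : ContDiff ℝ 1 σ₃₀)
    (hper₁ : ∀ x, σ₁₀ (x + 1) = σ₁₀ x) (hper₃ : ∀ x, σ₃₀ (x + 1) = σ₃₀ x)
    (hmean₁ : ∫ x in (0 : ℝ)..1, σ₁₀ x = 0)
    (hmean₃ : ∫ x in (0 : ℝ)..1, σ₃₀ x = 0)
    (MI : ℝ)
    (hMI : MI = (∫ x in (0 : ℝ)..1, |deriv σ₁₀ x|)
        + ∫ x in (0 : ℝ)..1, |deriv σ₃₀ x|)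
    (hcond : MI / ME > (3 / Real.log (13 / 12)) * (β / α)) :
    ∀ T : ℝ, 6 / (α * MI) < T →
      ¬ ∃ σ₁ σ₃ : ℝ → ℝ → ℝ,
          ContDiff ℝ 2 (fun p : ℝ × ℝ => σ₁ p.1 p.2) ∧
          ContDiff ℝ 2 (fun p : ℝ × ℝ => σ₃ p.1 p.2) ∧
          IsClassicalSolution α β σ₂ T σ₁ σ₃ ∧
          (∀ x, σ₁ x 0 = σ₁₀ x) ∧ (∀ x, σ₃ x 0 = σ₃₀ x) := by
  rintro T hT ⟨σ₁, σ₃, h₁, h₃, hsol, hinit₁, hinit₃⟩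
  obtain rfl : (σ₁ · 0) = σ₁₀ := funext hinit₁
  obtain rfl : (σ₃ · 0) = σ₃₀ := funext hinit₃
  obtain rfl : MI = variation σ₁ 0 + variation σ₃ 0 := hMI
  have hbound := abs_deriv_le_of_periodic one_half_pos hσ₂per hME.2
  have hper : Periodic σ₂ 1 := by simpa using Periodic.nat_mul hσ₂per 2
  have hlog : 0 < Real.log (13 / 12) := Real.log_pos (by norm_num)
  have hstrong := three_mul_mul_lt_of_div_lt hα hβ hlog ((abs_nonneg _).trans (hbound 0)) hcond
  rw [← abs_of_pos hβ] at hstrong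
  exact (classical_solution_blowup_general hα hσ₂C1 hper hbound h₁ h₃ hsol hstrong).not_gt hT
end

section
/- Let a < b and let g_N : [a,b] → ℝ be functions that are uniformly bounded and of uniformly bounded total variation, and set χ_N(t) := χ_N(a) + ∫_a^t g_N(τ) dτ with χ_N(a) a convergent sequence. Suppose: (i) χ_N converges pointwise on [a,b] to a function χ; (ii) g_N(t) → s(t) for every t ∈ [a,b]; (iii) the variation functions V_N(t) := Var_{[a,t]} g_N converge pointwise to a function s̄ on [a,b]. If s̄ is continuous at a point t₀ ∈ (a,b), then χ is differentiable at t₀ and χ'(t₀) = s(t₀). -/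
open MeasureTheory Filter Set Topology

/-!
On the interval between `t₀` and `t` the speed `g n` stays within `|V_n t - V_n t₀|` of `g n t₀`,
where `V_n` is its variation function. Integrating,
`‖χ_n t - χ_n t₀ - (t - t₀) • g n t₀‖ ≤ |V_n t - V_n t₀| * |t - t₀|`, an estimate that involves
only pointwise values and so passes to the limit as it stands. Continuity of `s̄ = lim V_n` at `t₀`
makes the limiting right-hand side `o(t - t₀)`.

The `g n` are measurable because a function is continuous wherever its variation function is, and
that function, being monotone, has at most countably many discontinuities.
-/

section Continuity

variable {α E : Type*} [LinearOrder α] [PseudoMetricSpace E] {f : α → E} {s : Set α}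

lemma dist_le_abs_variationOnFromTo (hf : LocallyBoundedVariationOn f s) {x y : α}
    (hx : x ∈ s) (hy : y ∈ s) : dist (f x) (f y) ≤ |variationOnFromTo f s x y| := by
  wlog hxy : x ≤ y generalizing x y
  · rw [dist_comm, variationOnFromTo.eq_neg_swap, abs_neg]
    exact this hy hx (le_of_not_ge hxy)
  rw [variationOnFromTo.eq_of_le f s hxy, ENNReal.abs_toReal]
  exact (hf x y hx hy).dist_le ⟨hx, left_mem_Icc.2 hxy⟩ ⟨hy, right_mem_Icc.2 hxy⟩

variable [TopologicalSpace α]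

lemma continuousWithinAt_of_variationOnFromTo (hf : LocallyBoundedVariationOn f s) {a x : α}
    (ha : a ∈ s) (hx : x ∈ s) (hV : ContinuousWithinAt (variationOnFromTo f s a) s x) :
    ContinuousWithinAt f s x := by
  rw [ContinuousWithinAt, tendsto_iff_dist_tendsto_zero] at hV ⊢
  refine squeeze_zero' (Eventually.of_forall fun _ ↦ dist_nonneg) ?_ hV
  filter_upwards [self_mem_nhdsWithin] with y hy
  rw [Real.dist_eq, variationOnFromTo.sub_right hf ha hy hx, dist_comm]
  exact dist_le_abs_variationOnFromTo hf hx hy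

variable [OrderTopology α]

lemma countable_not_continuousWithinAt_of_locallyBoundedVariationOn
    (hf : LocallyBoundedVariationOn f s) : {x ∈ s | ¬ContinuousWithinAt f s x}.Countable := by
  rcases s.eq_empty_or_nonempty with rfl | ⟨a, ha⟩
  · simp
  · refine (variationOnFromTo.monotoneOn hf ha).countable_not_continuousWithinAt.mono ?_
    rintro x ⟨hx, hfx⟩
    exact ⟨hx, fun hV ↦ hfx (continuousWithinAt_of_variationOnFromTo hf ha hx hV)⟩

variable [SecondCountableTopology α] [MeasurableSpace α] [OpensMeasurableSpace α]

lemma stronglyMeasurable_domRestrict_of_locallyBoundedVariationOn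
    (hf : LocallyBoundedVariationOn f s) : StronglyMeasurable (s.domRestrict f) := by
  have hsub : {x | ¬ContinuousAt (s.domRestrict f) x} ⊆
      Subtype.val ⁻¹' {x ∈ s | ¬ContinuousWithinAt f s x} := fun x hx ↦
    ⟨x.2, fun hfx ↦ hx ((continuousWithinAt_iff_continuousAt_domRestrict f x.2).1 hfx)⟩
  exact .of_countable_not_continuousAt (.mono hsub
    ((countable_not_continuousWithinAt_of_locallyBoundedVariationOn hf).preimage
      Subtype.val_injective))

lemma aestronglyMeasurable_restrict_of_locallyBoundedVariationOn {μ : Measure α}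
    (hf : LocallyBoundedVariationOn f s) (hs : MeasurableSet s) :
    AEStronglyMeasurable f (μ.restrict s) := by
  rw [← map_comap_subtype_coe hs, (MeasurableEmbedding.subtype_coe hs).aestronglyMeasurable_map_iff]
  exact (stronglyMeasurable_domRestrict_of_locallyBoundedVariationOn hf).aestronglyMeasurable

end Continuity

lemma toReal_eVariationOn_uIcc {α E : Type*} [LinearOrder α] [PseudoEMetricSpace E] {f : α → E}
    {a b x y : α} (hf : BoundedVariationOn f (Icc a b)) (hx : x ∈ Icc a b) (hy : y ∈ Icc a b) :
    (eVariationOn f (uIcc x y)).toReal =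
      |(eVariationOn f (Icc a y)).toReal - (eVariationOn f (Icc a x)).toReal| := by
  wlog hxy : x ≤ y generalizing x y
  · rw [uIcc_comm, abs_sub_comm]
    exact this hy hx (le_of_not_ge hxy)
  have hadd : eVariationOn f (Icc a x) + eVariationOn f (Icc x y) = eVariationOn f (Icc a y) := by
    simpa only [univ_inter] using eVariationOn.Icc_add_Icc f hx.1 hxy (mem_univ x)
  rw [← hadd, ENNReal.toReal_add (hf.mono (Icc_subset_Icc_right hx.2))
    (hf.mono (Icc_subset_Icc hx.1 hy.2)), add_sub_cancel_left, ENNReal.abs_toReal, uIcc_of_le hxy]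

lemma hasDerivWithinAt_of_norm_sub_sub_smul_le {𝕜 F : Type*} [NontriviallyNormedField 𝕜]
    [NormedAddCommGroup F] [NormedSpace 𝕜 F] {f : 𝕜 → F} {f' : F} {s : Set 𝕜} {x : 𝕜} {φ : 𝕜 → ℝ}
    (hφ : Tendsto φ (𝓝[s] x) (𝓝 0))
    (hf : ∀ y ∈ s, ‖f y - f x - (y - x) • f'‖ ≤ φ y * ‖y - x‖) : HasDerivWithinAt f f' s x := by
  refine .of_isLittleO (Asymptotics.isLittleO_iff.2 fun ε hε ↦ ?_)
  filter_upwards [self_mem_nhdsWithin, hφ.eventually_le_const hε] with y hy hφy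
  exact (hf y hy).trans (by gcongr)

section Integral

variable {E : Type*} [NormedAddCommGroup E] {f : ℝ → E} {x y : ℝ}

lemma intervalIntegrable_of_boundedVariationOn {μ : Measure ℝ} [IsLocallyFiniteMeasure μ]
    (hf : BoundedVariationOn f (uIcc x y)) : IntervalIntegrable f μ x y := by
  suffices IntegrableOn f (uIcc x y) μ from this.intervalIntegrable
  refine .of_bound isCompact_uIcc.measure_lt_top
    (aestronglyMeasurable_restrict_of_locallyBoundedVariationOn hf.locallyBoundedVariationOn
      measurableSet_uIcc)
    (‖f x‖ + (eVariationOn f (uIcc x y)).toReal) ?_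
  filter_upwards [ae_restrict_mem measurableSet_uIcc] with t ht
  have hdist := hf.dist_le ht left_mem_uIcc
  rw [dist_eq_norm] at hdist
  exact (norm_le_norm_add_norm_sub' (f t) (f x)).trans (by gcongr)

variable [NormedSpace ℝ E] [CompleteSpace E]

lemma norm_integral_sub_smul_le_eVariationOn (hf : BoundedVariationOn f (uIcc x y)) :
    ‖(∫ τ in x..y, f τ) - (y - x) • f x‖ ≤ (eVariationOn f (uIcc x y)).toReal * |y - x| := by
  rw [← intervalIntegral.integral_const, ← intervalIntegral.integral_sub
    (intervalIntegrable_of_boundedVariationOn hf) intervalIntegrable_const]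
  refine intervalIntegral.norm_integral_le_of_norm_le_const fun τ hτ ↦ ?_
  rw [← dist_eq_norm]
  exact hf.dist_le (uIoc_subset_uIcc hτ) left_mem_uIcc

lemma norm_primitive_sub_sub_smul_le {χ : ℝ → E} {a b : ℝ} (hf : BoundedVariationOn f (Icc a b))
    (hχ : ∀ t ∈ Icc a b, χ t = χ a + ∫ τ in a..t, f τ) (hx : x ∈ Icc a b) (hy : y ∈ Icc a b) :
    ‖χ y - χ x - (y - x) • f x‖ ≤
      |(eVariationOn f (Icc a y)).toReal - (eVariationOn f (Icc a x)).toReal| * |y - x| := by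
  have ha : a ∈ Icc a b := left_mem_Icc.2 (hx.1.trans hx.2)
  have hint : ∀ t ∈ Icc a b, IntervalIntegrable f volume a t := fun t ht ↦
    intervalIntegrable_of_boundedVariationOn (hf.mono (uIcc_subset_Icc ha ht))
  rw [hχ y hy, hχ x hx, add_sub_add_left_eq_sub,
    intervalIntegral.integral_interval_sub_left (hint y hy) (hint x hx),
    ← toReal_eVariationOn_uIcc hf hx hy]
  exact norm_integral_sub_smul_le_eVariationOn (hf.mono (uIcc_subset_Icc hx hy))

theorem derivative_of_limit_characteristic_general {ι : Type*} {l : Filter ι} [l.NeBot] {a b : ℝ}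
    {g χN : ι → ℝ → E} {χ : ℝ → E} {s₀ : E} {sbar : ℝ → ℝ}
    (hvar : ∀ n, BoundedVariationOn (g n) (Icc a b))
    (hχdef : ∀ n, ∀ t ∈ Icc a b, χN n t = χN n a + ∫ τ in a..t, g n τ)
    (hχconv : ∀ t ∈ Icc a b, Tendsto (fun n ↦ χN n t) l (𝓝 (χ t)))
    (hVconv : ∀ t ∈ Icc a b,
      Tendsto (fun n ↦ (eVariationOn (g n) (Icc a t)).toReal) l (𝓝 (sbar t)))
    {t₀ : ℝ} (ht₀ : t₀ ∈ Icc a b) (hgconv : Tendsto (fun n ↦ g n t₀) l (𝓝 s₀))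
    (hcont : ContinuousWithinAt sbar (Icc a b) t₀) :
    HasDerivWithinAt χ s₀ (Icc a b) t₀ := by
  have hmodulus : Tendsto (fun t ↦ |sbar t - sbar t₀|) (𝓝[Icc a b] t₀) (𝓝 0) := by
    simpa only [Real.dist_eq] using tendsto_iff_dist_tendsto_zero.1 hcont
  refine hasDerivWithinAt_of_norm_sub_sub_smul_le hmodulus fun t ht ↦ ?_
  exact le_of_tendsto_of_tendsto'
    (((hχconv t ht).sub (hχconv t₀ ht₀)).sub (hgconv.const_smul (t - t₀))).norm
    (((hVconv t ht).sub (hVconv t₀ ht₀)).abs.mul_const |t - t₀|)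
    fun n ↦ norm_primitive_sub_sub_smul_le (hvar n) (hχdef n) ht₀ ht

end Integral

/-- derivative-convergence lemma for limits of approximate
characteristics.  If `χ_N(t) = χ_N(a) + ∫_a^t g_N`, the `g_N` are uniformly
bounded with uniformly bounded variation, `χ_N → χ` and `g_N → s` pointwise,
and the variation functions `t ↦ Var_{[a,t]} g_N` converge pointwise to `s̄`,
then at every interior continuity point `t₀` of `s̄` the limit `χ` is
differentiable with `χ'(t₀) = s(t₀)`. -/
theorem derivative_of_limit_characteristic
    (a b : ℝ) (hab : a < b)
    (g : ℕ → ℝ → ℝ) (χN : ℕ → ℝ → ℝ) (χ s sbar : ℝ → ℝ)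
    (hgmeas : ∀ N, Measurable (g N))
    (C : ℝ) (hbd : ∀ N, ∀ t ∈ Set.Icc a b, |g N t| ≤ C)
    (V : ℝ) (hvar : ∀ N, eVariationOn (g N) (Set.Icc a b) ≤ ENNReal.ofReal V)
    (hχdef : ∀ N, ∀ t ∈ Set.Icc a b, χN N t = χN N a + ∫ τ in a..t, g N τ)
    (hχconv : ∀ t ∈ Set.Icc a b, Tendsto (fun N => χN N t) atTop (𝓝 (χ t)))
    (hgconv : ∀ t ∈ Set.Icc a b, Tendsto (fun N => g N t) atTop (𝓝 (s t)))
    (hVconv : ∀ t ∈ Set.Icc a b,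
      Tendsto (fun N => (eVariationOn (g N) (Set.Icc a t)).toReal)
        atTop (𝓝 (sbar t)))
    (t₀ : ℝ) (ht₀ : t₀ ∈ Set.Ioo a b)
    (hcont : ContinuousWithinAt sbar (Set.Icc a b) t₀) :
    HasDerivAt χ (s t₀) t₀ := by
  have hbv : ∀ N, BoundedVariationOn (g N) (Icc a b) := fun N ↦
    ne_top_of_le_ne_top ENNReal.ofReal_ne_top (hvar N)
  have hta : t₀ ∈ Icc a b := Ioo_subset_Icc_self ht₀
  exact (derivative_of_limit_characteristic_general hbv hχdef hχconv hVconv hta (hgconv t₀ hta)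
    hcont).hasDerivAt (Icc_mem_nhds ht₀.1 ht₀.2)
end
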